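/- arXiv:1703.03639 — 2 statements merged into one kernel-verified Lean document; each statement's English description precedes it below -/
import Mathlib

section
/- Suppose d, n ∈ ℕ are such that 3 ≤ d ≤ n/4 and S ⊆ V satisfies |S| ≤ n/6. Let H be a graph with vertex set S and let F be a bipartite graph with vertex partition (S, V∖S) such that Δ(F ∪ H) ≤ d. Let v ∈ V∖S. Then the conditional expectation, with respect to the uniform distribution on 𝒢_{n,d}, of d_{G,S}(v) − d_F(v) given that G_{n,d}[S] = H and F ⊆ G_{n,d} is at most 6d|S|/n. Equivalently, Σ_{G} (d_{G,S}(v) − d_F(v)) ≤ (6d|S|/n) · |{G ∈ 𝒢_{n,d} : G[S] = H, F ⊆ G}|, where the sum is over all G ∈ 𝒢_{n,d} with G[S] = H and F ⊆ G. -/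
open scoped Classical BigOperators

noncomputable section


def swg {n : ℕ} (G : SimpleGraph (Fin n)) (v s x y : Fin n) : SimpleGraph (Fin n) :=
  symmDiff G (SimpleGraph.fromEdgeSet {s(v,s), s(x,y), s(v,x), s(s,y)})

lemma swg_adj {n : ℕ} (G : SimpleGraph (Fin n)) (v s x y a b : Fin n) :
    (swg G v s x y).Adj a b ↔
      ((G.Adj a b ∧ ¬ (s(a,b) ∈ ({s(v,s), s(x,y), s(v,x), s(s,y)} : Set (Sym2 (Fin n))))) ∨
       (¬ G.Adj a b ∧ s(a,b) ∈ ({s(v,s), s(x,y), s(v,x), s(s,y)} : Set (Sym2 (Fin n))) ∧ a ≠ b)) := by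
  have h := G.ne_of_adj (a := a) (b := b)
  simp only [swg, symmDiff, SimpleGraph.sup_adj, SimpleGraph.sdiff_adj, SimpleGraph.fromEdgeSet_adj]
  tauto

lemma card_swap {n : ℕ} (N M : Finset (Fin n)) (p q : Fin n) (hq : q ∈ N) (hp : p ∉ N)
    (h : ∀ b, b ∈ M ↔ (b = p ∨ (b ∈ N ∧ b ≠ q))) : M.card = N.card := by
  have : M = insert p (N.erase q) := by
    ext b; rw [h]; simp; tauto
  rw [this, Finset.card_insert_of_notMem (by simp [hp]), Finset.card_erase_of_mem hq]
  have := Finset.card_pos.mpr ⟨q, hq⟩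
  omega

lemma swg_degree {n : ℕ} (G : SimpleGraph (Fin n)) (v s x y : Fin n)
    (hvs : G.Adj v s) (hxy : G.Adj x y) (hvx : ¬ G.Adj v x) (hsy : ¬ G.Adj s y)
    (n1 : x ≠ v) (n2 : y ≠ v) (n3 : x ≠ s) (n4 : y ≠ s) (w : Fin n) :
    (swg G v s x y).degree w = G.degree w := by
  have n5 := hvs.ne
  have n6 := hxy.ne
  have hvs' := hvs.symm
  have hxy' := hxy.symm
  have hvx' : ¬ G.Adj x v := fun h => hvx h.symm
  have hsy' : ¬ G.Adj y s := fun h => hsy h.symm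
  rw [← SimpleGraph.card_neighborFinset_eq_degree, ← SimpleGraph.card_neighborFinset_eq_degree]
  by_cases w1 : w = v
  · subst w1
    apply card_swap _ _ x s (by simpa) (by simpa)
    intro b
    simp only [SimpleGraph.mem_neighborFinset, swg_adj, Set.mem_insert_iff, Set.mem_singleton_iff, Sym2.eq_iff]
    grind
  by_cases w2 : w = s
  · subst w2
    apply card_swap _ _ y v (by simpa) (by simpa)
    intro b
    simp only [SimpleGraph.mem_neighborFinset, swg_adj, Set.mem_insert_iff, Set.mem_singleton_iff, Sym2.eq_iff]
    grind
  by_cases w3 : w = x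
  · subst w3
    apply card_swap _ _ v y (by simpa) (by simpa)
    intro b
    simp only [SimpleGraph.mem_neighborFinset, swg_adj, Set.mem_insert_iff, Set.mem_singleton_iff, Sym2.eq_iff]
    grind
  by_cases w4 : w = y
  · subst w4
    apply card_swap _ _ s x (by simpa) (by simpa)
    intro b
    simp only [SimpleGraph.mem_neighborFinset, swg_adj, Set.mem_insert_iff, Set.mem_singleton_iff, Sym2.eq_iff]
    grind
  congr 1
  ext b
  simp only [SimpleGraph.mem_neighborFinset, swg_adj, Set.mem_insert_iff, Set.mem_singleton_iff, Sym2.eq_iff]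
  grind

def goodP {n : ℕ} (G : SimpleGraph (Fin n)) (S : Finset (Fin n)) (v s : Fin n) :
    Finset (Fin n × Fin n) :=
  Finset.univ.filter (fun p => p.1 ∉ S ∧ p.2 ∉ S ∧ G.Adj p.1 p.2 ∧ p.1 ≠ v ∧ ¬ G.Adj v p.1 ∧
    p.2 ≠ v ∧ ¬ G.Adj s p.2)

def adjP {n : ℕ} (G : SimpleGraph (Fin n)) (T : Finset (Fin n)) : Finset (Σ _ : Fin n, Fin n) :=
  T.sigma (fun a => G.neighborFinset a)

lemma adjP_card {n d : ℕ} (G : SimpleGraph (Fin n)) (T : Finset (Fin n))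
    (hG : ∀ w, G.degree w = d) : (adjP G T).card = T.card * d := by
  simp [adjP, Finset.card_sigma, hG]

lemma good_card {n d : ℕ} (hdn : 4 * d ≤ n) (G : SimpleGraph (Fin n)) (S : Finset (Fin n))
    (hS : 6 * S.card ≤ n) (hG : ∀ w, G.degree w = d) (v s : Fin n) (hs : s ∈ S)
    (hvs : G.Adj v s) : n * d ≤ 6 * (goodP G S v s).card := by
  set B1 := S ∪ insert v ((G.neighborFinset v).erase s) with hB1
  set B2 := S ∪ G.neighborFinset s with hB2
  have c1 : B1.card ≤ S.card + d := by
    refine (Finset.card_union_le _ _).trans ?_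
    gcongr
    refine (Finset.card_insert_le _ _).trans ?_
    have hm : s ∈ G.neighborFinset v := by simpa
    rw [Finset.card_erase_of_mem hm]
    have := Finset.card_pos.mpr ⟨s, hm⟩
    rw [SimpleGraph.card_neighborFinset_eq_degree, hG] at *
    omega
  have c2 : B2.card ≤ S.card + d := by
    refine (Finset.card_union_le _ _).trans ?_
    rw [SimpleGraph.card_neighborFinset_eq_degree, hG]
  have cov : adjP G Finset.univ ⊆ ((goodP G S v s).image (fun p => ⟨p.1, p.2⟩)) ∪
      (adjP G B1 ∪ (adjP G B2).image (fun p => ⟨p.2, p.1⟩)) := by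
    rintro ⟨a, b⟩ h
    have hab : G.Adj a b := by simpa [adjP] using h
    by_cases h1 : a ∈ B1
    · apply Finset.mem_union_right; apply Finset.mem_union_left
      simp [adjP, h1, hab]
    by_cases h2 : b ∈ B2
    · apply Finset.mem_union_right; apply Finset.mem_union_right
      rw [Finset.mem_image]
      exact ⟨⟨b, a⟩, by simp [adjP, h2, hab.symm], rfl⟩
    apply Finset.mem_union_left
    rw [Finset.mem_image]
    refine ⟨(a, b), ?_, rfl⟩
    have hvs' := hvs.symm
    simp only [hB1, hB2, Finset.mem_union, Finset.mem_insert, Finset.mem_erase,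
      SimpleGraph.mem_neighborFinset] at h1 h2
    simp only [goodP, Finset.mem_filter, Finset.mem_univ, true_and]
    grind
  have k := Finset.card_le_card cov
  have k1 := Finset.card_union_le ((goodP G S v s).image (fun p => (⟨p.1, p.2⟩ : Σ _ : Fin n, Fin n)))
      (adjP G B1 ∪ (adjP G B2).image (fun p => ⟨p.2, p.1⟩))
  have k2 := Finset.card_union_le (adjP G B1) ((adjP G B2).image (fun p => ⟨p.2, p.1⟩))
  have k3 := Finset.card_image_le (s := goodP G S v s) (f := fun p => (⟨p.1, p.2⟩ : Σ _ : Fin n, Fin n))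
  have k4 := Finset.card_image_le (s := adjP G B2) (f := fun p => (⟨p.2, p.1⟩ : Σ _ : Fin n, Fin n))
  rw [adjP_card G _ hG] at k k2 k4
  simp only [Finset.card_univ, Fintype.card_fin] at k
  have m1 := Nat.mul_le_mul_right d c1
  have m2 := Nat.mul_le_mul_right d c2
  have m3 := Nat.mul_le_mul_right d hS
  have m4 := Nat.mul_le_mul_right d hdn
  nlinarith

/-- **Lemma 3.2.** Switching bound on the conditional expectation of the number of
unexposed neighbours of `v` in `S`. Stated in counting form: the sum of
`d_{G,S}(v) - d_F(v)` over all simple `d`-regular graphs `G` on `n` vertices with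
`G[S] = H` and `F ⊆ G` is at most `6 d |S| / n` times the number of such graphs. -/
theorem statement_6 (n d : ℕ) (hd : 3 ≤ d) (hdn : 4 * d ≤ n)
    (S : Finset (Fin n)) (hS : 6 * S.card ≤ n)
    (H : SimpleGraph (Fin n)) (hH : ∀ a b : Fin n, H.Adj a b → a ∈ S ∧ b ∈ S)
    (F : SimpleGraph (Fin n))
    (hF : ∀ a b : Fin n, F.Adj a b → (a ∈ S ∧ b ∉ S) ∨ (a ∉ S ∧ b ∈ S))
    (hΔ : ∀ w : Fin n, (F ⊔ H).degree w ≤ d)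
    (v : Fin n) (hv : v ∉ S) :
    ∑ G ∈ Finset.univ.filter (fun G : SimpleGraph (Fin n) =>
        (∀ w, G.degree w = d) ∧
        (∀ a b : Fin n, a ∈ S → b ∈ S → (G.Adj a b ↔ H.Adj a b)) ∧ F ≤ G),
      (((G.neighborFinset v ∩ S).card : ℝ) - (F.degree v : ℝ))
      ≤ 6 * (d : ℝ) * (S.card : ℝ) / (n : ℝ) *
        ((Finset.univ.filter (fun G : SimpleGraph (Fin n) =>
          (∀ w, G.degree w = d) ∧
          (∀ a b : Fin n, a ∈ S → b ∈ S → (G.Adj a b ↔ H.Adj a b)) ∧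
          F ≤ G)).card : ℝ) := by
  set Q := Finset.univ.filter (fun G : SimpleGraph (Fin n) =>
        (∀ w, G.degree w = d) ∧
        (∀ a b : Fin n, a ∈ S → b ∈ S → (G.Adj a b ↔ H.Adj a b)) ∧ F ≤ G) with hQ
  have hQm : ∀ G, G ∈ Q ↔ ((∀ w, G.degree w = d) ∧
        (∀ a b : Fin n, a ∈ S → b ∈ S → (G.Adj a b ↔ H.Adj a b)) ∧ F ≤ G) := by
    intro G; simp [hQ]
  let N : SimpleGraph (Fin n) → Finset (Fin n) := fun G =>
    (G.neighborFinset v ∩ S) \ F.neighborFinset v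
  have hN : ∀ G ∈ Q, ((G.neighborFinset v ∩ S).card : ℝ) - (F.degree v : ℝ) = ((N G).card : ℝ) := by
    intro G hG
    have hFG := ((hQm G).1 hG).2.2
    have hsub : F.neighborFinset v ⊆ G.neighborFinset v ∩ S := by
      intro b hb
      rw [SimpleGraph.mem_neighborFinset] at hb
      rw [Finset.mem_inter, SimpleGraph.mem_neighborFinset]
      refine ⟨hFG hb, ?_⟩
      rcases hF _ _ hb with h | h
      · exact absurd h.1 hv
      · exact h.2
    rw [← SimpleGraph.card_neighborFinset_eq_degree, Finset.cast_card_sdiff hsub]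
  rw [Finset.sum_congr rfl hN]
  let A : Finset (Σ _ : SimpleGraph (Fin n), Σ _ : Fin n, Fin n × Fin n) :=
    Q.sigma (fun G => (N G).sigma (fun s => goodP G S v s))
  let B : Finset (Σ _ : SimpleGraph (Fin n), Σ _ : Fin n, Fin n × Fin n) :=
    Q.sigma (fun G => S.sigma (fun s => G.neighborFinset v ×ˢ G.neighborFinset s))
  have hB : B.card = Q.card * (S.card * (d * d)) := by
    simp only [B, Finset.card_sigma, Finset.card_product, SimpleGraph.card_neighborFinset_eq_degree]
    rw [Finset.sum_congr rfl (g := fun _ => S.card * (d * d))]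
    · simp
    · intro G hG
      simp [((hQm G).1 hG).1]
  have hA : (∑ G ∈ Q, (N G).card) * (n * d) ≤ 6 * A.card := by
    simp only [A, Finset.card_sigma, Finset.sum_mul, Finset.mul_sum]
    apply Finset.sum_le_sum
    intro G hG
    rw [← smul_eq_mul, ← Finset.sum_const]
    apply Finset.sum_le_sum
    intro s hs
    simp only [N, Finset.mem_sdiff, Finset.mem_inter, SimpleGraph.mem_neighborFinset] at hs
    exact good_card hdn G S hS ((hQm G).1 hG).1 v s hs.1.2 hs.1.1
  have hAB : A.card ≤ B.card := by
    apply Finset.card_le_card_of_injOn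
      (fun t => ⟨swg t.1 v t.2.1 t.2.2.1 t.2.2.2, t.2⟩)
    · rintro ⟨G, s, x, y⟩ h
      simp only [A, N, goodP, Finset.coe_sigma, Set.mem_sigma_iff, Finset.mem_coe, Finset.mem_sigma,
        Finset.mem_sdiff, Finset.mem_inter, SimpleGraph.mem_neighborFinset, Finset.mem_filter,
        Finset.mem_univ, true_and] at h
      obtain ⟨hG, ⟨⟨hvs, hsS⟩, hFvs⟩, hx, hy, hxy, hxv, hvx, hyv, hsy⟩ := h
      obtain ⟨g1, g2, g3⟩ := (hQm G).1 hG
      have hxs : x ≠ s := fun h => hx (h ▸ hsS)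
      have hys : y ≠ s := fun h => hy (h ▸ hsS)
      simp only [B, Finset.mem_coe, Finset.mem_sigma, Finset.mem_product,
        SimpleGraph.mem_neighborFinset]
      refine ⟨(hQm _).2 ⟨?_, ?_, ?_⟩, hsS, ?_, ?_⟩
      · intro w
        rw [swg_degree G v s x y hvs hxy hvx hsy hxv hyv hxs hys, g1]
      · intro a b ha hb
        rw [← g2 a b ha hb]
        simp only [swg_adj, Set.mem_insert_iff, Set.mem_singleton_iff, Sym2.eq_iff]
        grind
      · intro a b hab
        have h1 := g3 hab
        have h2 := hF a b hab
        have h3 := hab.symm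
        have h4 := hvx
        have h5 : ¬ G.Adj x v := fun h => hvx h.symm
        have h6 : ¬ G.Adj y s := fun h => hsy h.symm
        simp only [swg_adj, Set.mem_insert_iff, Set.mem_singleton_iff, Sym2.eq_iff]
        grind
      · simp only [swg_adj, Set.mem_insert_iff, Set.mem_singleton_iff, Sym2.eq_iff]
        grind
      · simp only [swg_adj, Set.mem_insert_iff, Set.mem_singleton_iff, Sym2.eq_iff]
        grind
    · rintro ⟨G, t⟩ _ ⟨G', t'⟩ _ h
      simp only [Sigma.mk.injEq, heq_eq_eq] at h
      obtain ⟨h1, rfl⟩ := h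
      have := symmDiff_left_injective _ h1
      rw [this]
  have hdpos : (0 : ℝ) < d := by exact_mod_cast (by omega : 0 < d)
  have hnpos : (0 : ℝ) < n := by exact_mod_cast (by omega : 0 < n)
  have key : (∑ G ∈ Q, (N G).card) * (n * d) ≤ 6 * (Q.card * (S.card * (d * d))) := by
    rw [← hB]; omega
  have key' : (∑ G ∈ Q, ((N G).card : ℝ)) * (n * d) ≤ 6 * (Q.card * (S.card * (d * d))) := by
    exact_mod_cast key
  rw [div_mul_eq_mul_div, le_div_iff₀ hnpos]
  refine le_of_mul_le_mul_right ?_ hdpos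
  linarith
end
end

section
/- Suppose d, n ∈ ℕ are such that 3 ≤ d ≤ n/4 and S ⊆ V satisfies |S| ≤ n/6. Let H be a graph with vertex set S, let F be a bipartite graph with vertex partition (S, V∖S) such that Δ(F ∪ H) ≤ d, and let v ∈ V∖S. For every integer k ≥ 0 let ℱ_k = {G ∈ 𝒢_{n,d} : G[S] = H, F ⊆ G, d_{G,S}(v) − d_F(v) = k}. Then for every k ≥ 0, |ℱ_{k+1}| ≤ (6d|S|/n)/(k+1) · |ℱ_k|. -/
open scoped Classical BigOperators

noncomputable section

/-- For `k : ℕ`, `ℱ_k` is the set of simple `d`-regular graphs `G` on `n` vertices with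
`G[S] = H`, `F ⊆ G` and `d_{G,S}(v) - d_F(v) = k`. -/
def switchClass (n d : ℕ) (S : Finset (Fin n)) (H F : SimpleGraph (Fin n))
    (v : Fin n) (k : ℕ) : Finset (SimpleGraph (Fin n)) :=
  Finset.univ.filter (fun G : SimpleGraph (Fin n) =>
    (∀ w, G.degree w = d) ∧
    (∀ a b : Fin n, a ∈ S → b ∈ S → (G.Adj a b ↔ H.Adj a b)) ∧
    F ≤ G ∧ (G.neighborFinset v ∩ S).card = F.degree v + k)

def swG {n : ℕ} (G : SimpleGraph (Fin n)) (v u x y : Fin n) : SimpleGraph (Fin n) where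
  Adj a b := a ≠ b ∧ ((G.Adj a b ∧ s(a,b) ≠ s(u,v) ∧ s(a,b) ≠ s(x,y)) ∨ s(a,b) = s(u,x) ∨ s(a,b) = s(v,y))
  symm := ⟨by
    intro a b h
    rw [Sym2.eq_swap, G.adj_comm]
    exact ⟨h.1.symm, h.2⟩⟩
  loopless := ⟨fun a h => h.1 rfl⟩

lemma swG_adj {n : ℕ} (G : SimpleGraph (Fin n)) (v u x y a b : Fin n) :
    (swG G v u x y).Adj a b ↔ a ≠ b ∧ ((G.Adj a b ∧ ¬ ((a = u ∧ b = v) ∨ (a = v ∧ b = u)) ∧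
      ¬ ((a = x ∧ b = y) ∨ (a = y ∧ b = x))) ∨ ((a = u ∧ b = x) ∨ (a = x ∧ b = u)) ∨
      ((a = v ∧ b = y) ∨ (a = y ∧ b = v))) := by
  simp only [swG, Sym2.eq_iff, ne_eq]

/-- conditions for a switching -/
def Good {n : ℕ} (G : SimpleGraph (Fin n)) (v u x y : Fin n) : Prop :=
  G.Adj u v ∧ G.Adj x y ∧ ¬ G.Adj u x ∧ ¬ G.Adj v y ∧ y ≠ v ∧ x ≠ u ∧ y ≠ u

lemma swG_inv {n : ℕ} (G : SimpleGraph (Fin n)) (v u x y : Fin n) (h : Good G v u x y) (a b : Fin n) :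
    G.Adj a b ↔ (((swG G v u x y).Adj a b ∧ ¬ ((a = u ∧ b = x) ∨ (a = x ∧ b = u)) ∧
      ¬ ((a = v ∧ b = y) ∨ (a = y ∧ b = v))) ∨ ((a = u ∧ b = v) ∨ (a = v ∧ b = u)) ∨
      ((a = x ∧ b = y) ∨ (a = y ∧ b = x))) := by
  obtain ⟨h1, h2, h3, h4, h5, h6, h7⟩ := h
  rw [swG_adj]
  have h1' := h1.symm
  have h2' := h2.symm
  have h3' : ¬ G.Adj x u := fun h => h3 h.symm
  have h4' : ¬ G.Adj y v := fun h => h4 h.symm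
  have hl : G.Adj a b → a ≠ b := fun h => h.ne
  grind

lemma card_swap_s7 {n : ℕ} (A : Finset (Fin n)) (p q : Fin n) (hp : p ∈ A) (hq : q ∉ A) :
    (insert q (A.erase p)).card = A.card := by
  rw [Finset.card_insert_of_notMem (by simp [hq]), Finset.card_erase_of_mem hp]
  have := Finset.card_pos.2 ⟨p, hp⟩
  omega

lemma swG_nv {n : ℕ} (G : SimpleGraph (Fin n)) (v u x y : Fin n) (h : Good G v u x y) :
    (swG G v u x y).neighborFinset v = insert y ((G.neighborFinset v).erase u) := by
  obtain ⟨h1, h2, h3, h4, h5, h6, h7⟩ := h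
  have e1 := h1.ne
  have e2 := h2.ne
  have e3 : x ≠ v := by rintro rfl; exact h3 h1
  ext b
  have hl : G.Adj v b → v ≠ b := fun h => h.ne
  simp only [SimpleGraph.mem_neighborFinset, swG_adj, Finset.mem_insert, Finset.mem_erase]
  grind

lemma swG_degree {n : ℕ} (G : SimpleGraph (Fin n)) (v u x y : Fin n) (h : Good G v u x y)
    (w : Fin n) : (swG G v u x y).degree w = G.degree w := by
  have h0 := h
  obtain ⟨h1, h2, h3, h4, h5, h6, h7⟩ := h
  have h1' := h1.symm
  have h2' := h2.symm
  have h3' : ¬ G.Adj x u := fun h => h3 h.symm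
  have h4' : ¬ G.Adj y v := fun h => h4 h.symm
  have e1 := h1.ne
  have e2 := h2.ne
  have e3 : x ≠ v := by rintro rfl; exact h3 h1
  have hl : ∀ b, G.Adj w b → w ≠ b := fun b h => h.ne
  rw [← SimpleGraph.card_neighborFinset_eq_degree, ← SimpleGraph.card_neighborFinset_eq_degree]
  by_cases hwv : w = v
  · subst hwv
    rw [swG_nv _ _ _ _ _ h0, card_swap_s7 _ _ _ (by simpa using h1') (by simpa using h4)]
  by_cases hwu : w = u
  · subst hwu
    rw [← card_swap_s7 (G.neighborFinset w) v x (by simpa using h1) (by simpa using h3)]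
    congr 1
    ext b
    have := hl b
    simp only [SimpleGraph.mem_neighborFinset, swG_adj, Finset.mem_insert, Finset.mem_erase]
    grind
  by_cases hwx : w = x
  · subst hwx
    rw [← card_swap_s7 (G.neighborFinset w) y u (by simpa using h2) (by simpa using h3')]
    congr 1
    ext b
    have := hl b
    simp only [SimpleGraph.mem_neighborFinset, swG_adj, Finset.mem_insert, Finset.mem_erase]
    grind
  by_cases hwy : w = y
  · subst hwy
    rw [← card_swap_s7 (G.neighborFinset w) x v (by simpa using h2') (by simpa using h4')]
    congr 1
    ext b
    have := hl b
    simp only [SimpleGraph.mem_neighborFinset, swG_adj, Finset.mem_insert, Finset.mem_erase]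
    grind
  congr 1
  ext b
  have := hl b
  simp only [SimpleGraph.mem_neighborFinset, swG_adj]
  grind

def tSet {n : ℕ} (S : Finset (Fin n)) (G : SimpleGraph (Fin n)) (v u : Fin n) :
    Finset (Fin n × Fin n) :=
  Finset.univ.filter fun p => G.Adj p.1 p.2 ∧ p.1 ∉ S ∧ p.2 ∉ S ∧ ¬ G.Adj u p.1 ∧
    ¬ G.Adj v p.2 ∧ p.2 ≠ v

lemma card_pairs {n d : ℕ} (G : SimpleGraph (Fin n)) (hG : ∀ w, G.degree w = d)
    (A : Finset (Fin n)) :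
    (A.sigma fun a => G.neighborFinset a).card = A.card * d := by
  rw [Finset.card_sigma]
  simp [hG]

lemma tSet_card {n d : ℕ} (hdn : 4 * d ≤ n) (S : Finset (Fin n)) (hS : 6 * S.card ≤ n)
    (G : SimpleGraph (Fin n)) (hG : ∀ w, G.degree w = d) (v u : Fin n) (hu : u ∈ S)
    (huv : G.Adj u v) : d * n ≤ 6 * (tSet S G v u).card := by
  set A := S ∪ G.neighborFinset u with hA
  set B := S ∪ insert v ((G.neighborFinset v).erase u) with hB
  have hAc : A.card ≤ S.card + d := by
    refine (Finset.card_union_le _ _).trans ?_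
    rw [SimpleGraph.card_neighborFinset_eq_degree, hG]
  have hBc : B.card ≤ S.card + d := by
    refine (Finset.card_union_le _ _).trans ?_
    rw [card_swap_s7 _ _ _ (by simpa using huv.symm) (by simp),
      SimpleGraph.card_neighborFinset_eq_degree, hG]
  have hsub : (Finset.univ.sigma fun a => G.neighborFinset a) ⊆
      (tSet S G v u).image (fun p => (⟨p.1, p.2⟩ : Σ _ : Fin n, Fin n)) ∪
      ((A.sigma fun a => G.neighborFinset a) ∪
      (B.sigma fun a => G.neighborFinset a).image
        (fun p => (⟨p.2, p.1⟩ : Σ _ : Fin n, Fin n))) := by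
    rintro ⟨x, y⟩ hxy
    simp only [Finset.mem_sigma, Finset.mem_univ, true_and, SimpleGraph.mem_neighborFinset] at hxy
    have hyx := hxy.symm
    simp only [Finset.mem_union, Finset.mem_image, Finset.mem_sigma,
      SimpleGraph.mem_neighborFinset]
    by_cases h1 : x ∈ A
    · exact Or.inr (Or.inl ⟨h1, hxy⟩)
    by_cases h2 : y ∈ B
    · exact Or.inr (Or.inr ⟨⟨y, x⟩, ⟨h2, hyx⟩, rfl⟩)
    refine Or.inl ⟨(x, y), ?_, rfl⟩
    simp only [hA, hB, Finset.mem_union, Finset.mem_insert, Finset.mem_erase,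
      SimpleGraph.mem_neighborFinset] at h1 h2
    simp only [tSet, Finset.mem_filter, Finset.mem_univ, true_and]
    grind
  have hc := (Finset.card_le_card hsub).trans ((Finset.card_union_le _ _).trans
    (Nat.add_le_add Finset.card_image_le ((Finset.card_union_le _ _).trans
      (Nat.add_le_add le_rfl Finset.card_image_le))))
  rw [card_pairs G hG, card_pairs G hG, card_pairs G hG, Finset.card_univ, Fintype.card_fin] at hc
  have := Nat.mul_le_mul_right d hAc
  have := Nat.mul_le_mul_right d hBc
  have := Nat.mul_le_mul_right d hS
  have := Nat.mul_le_mul_right d hdn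
  nlinarith

lemma swG_mem {n d : ℕ} (S : Finset (Fin n)) (H F : SimpleGraph (Fin n))
    (hF : ∀ a b : Fin n, F.Adj a b → (a ∈ S ∧ b ∉ S) ∨ (a ∉ S ∧ b ∈ S))
    (v : Fin n) (hv : v ∉ S) (k : ℕ) (G : SimpleGraph (Fin n))
    (hG : G ∈ switchClass n d S H F v (k + 1)) (u x y : Fin n) (hu : u ∈ S)
    (huF : ¬ F.Adj v u) (hx : x ∉ S) (hy : y ∉ S) (h : Good G v u x y) :
    swG G v u x y ∈ switchClass n d S H F v k := by
  simp only [switchClass, Finset.mem_filter, Finset.mem_univ, true_and] at hG ⊢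
  obtain ⟨g1, g2, g3, g4⟩ := hG
  have huF' : ¬ F.Adj u v := fun h => huF h.symm
  refine ⟨fun w => (swG_degree G v u x y h w).trans (g1 w), ?_, ?_, ?_⟩
  · intro a b ha hb
    rw [← g2 a b ha hb, swG_adj]
    have hl : G.Adj a b → a ≠ b := fun h => h.ne
    grind
  · intro a b hab
    have h1 := g3 hab
    have h2 := hF a b hab
    rw [swG_adj]
    have := h1.ne
    grind
  · rw [swG_nv _ _ _ _ _ h, Finset.insert_inter_of_notMem hy, Finset.erase_inter,
      Finset.card_erase_of_mem (by simp [hu, h.1.symm]), g4]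
    omega

/-- **Key switching inequality in Lemma 3.2:** `|ℱ_{k+1}| ≤ (6d|S|/n)/(k+1) · |ℱ_k|`. -/
theorem statement_7 (n d : ℕ) (hd : 3 ≤ d) (hdn : 4 * d ≤ n)
    (S : Finset (Fin n)) (hS : 6 * S.card ≤ n)
    (H : SimpleGraph (Fin n)) (hH : ∀ a b : Fin n, H.Adj a b → a ∈ S ∧ b ∈ S)
    (F : SimpleGraph (Fin n))
    (hF : ∀ a b : Fin n, F.Adj a b → (a ∈ S ∧ b ∉ S) ∨ (a ∉ S ∧ b ∈ S))
    (hΔ : ∀ w : Fin n, (F ⊔ H).degree w ≤ d)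
    (v : Fin n) (hv : v ∉ S) (k : ℕ) :
    ((switchClass n d S H F v (k + 1)).card : ℝ)
      ≤ (6 * (d : ℝ) * (S.card : ℝ) / (n : ℝ)) / ((k : ℝ) + 1) *
        ((switchClass n d S H F v k).card : ℝ) := by
  set A := (switchClass n d S H F v (k + 1)).sigma (fun G =>
    ((G.neighborFinset v ∩ S) \ F.neighborFinset v).sigma (fun u => tSet S G v u)) with hA
  set B := (switchClass n d S H F v k).sigma (fun G =>
    S.sigma (fun u => G.neighborFinset u ×ˢ G.neighborFinset v)) with hB
  have hgood : ∀ G u x y, (⟨G, ⟨u, (x, y)⟩⟩ : Σ _ : SimpleGraph (Fin n), Σ _ : Fin n, Fin n × Fin n) ∈ A →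
      G ∈ switchClass n d S H F v (k + 1) ∧ u ∈ S ∧ ¬ F.Adj v u ∧ x ∉ S ∧ y ∉ S ∧ Good G v u x y := by
    intro G u x y h
    simp only [hA, Finset.mem_sigma, Finset.mem_sdiff, Finset.mem_inter,
      SimpleGraph.mem_neighborFinset, tSet, Finset.mem_filter, Finset.mem_univ, true_and] at h
    obtain ⟨h1, ⟨⟨h2, h3⟩, h4⟩, h5, h6, h7, h8, h9, h10⟩ := h
    refine ⟨h1, h3, h4, h6, h7, h2.symm, h5, h8, h9, h10, ?_, ?_⟩
    · rintro rfl; exact h6 h3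
    · rintro rfl; exact h7 h3
  have hAB : A.card ≤ B.card := by
    refine Finset.card_le_card_of_injOn
      (fun t => ⟨swG t.1 v t.2.1 t.2.2.1 t.2.2.2, t.2⟩) ?_ ?_
    · rintro ⟨G, u, x, y⟩ ht
      obtain ⟨h1, h2, h3, h4, h5, h6⟩ := hgood G u x y ht
      rw [hB, Finset.mem_coe]
      simp only [ Finset.mem_sigma, Finset.mem_product,
        SimpleGraph.mem_neighborFinset]
      refine ⟨swG_mem S H F hF v hv k G h1 u x y h2 h3 h4 h5 h6, h2, ?_, ?_⟩
      · rw [swG_adj]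
        exact ⟨h6.2.2.2.2.2.1.symm, by simp⟩
      · rw [swG_adj]
        exact ⟨h6.2.2.2.2.1.symm, by simp⟩
    · rintro ⟨G, u, x, y⟩ ht ⟨G', u', x', y'⟩ ht' heq
      obtain ⟨-, -, -, -, -, h6⟩ := hgood G u x y ht
      obtain ⟨-, -, -, -, -, h6'⟩ := hgood G' u' x' y' ht'
      simp only [Sigma.mk.injEq, heq_eq_eq, Prod.mk.injEq] at heq ⊢
      obtain ⟨e, rfl, rfl, rfl⟩ := heq
      refine ⟨?_, rfl, rfl, rfl⟩
      ext a b
      rw [swG_inv G v u x y h6, swG_inv G' v u x y h6', e]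
  have hBc : B.card = (switchClass n d S H F v k).card * (S.card * (d * d)) := by
    rw [hB, Finset.card_sigma, Finset.sum_const_nat]
    intro G hG
    simp only [switchClass, Finset.mem_filter, Finset.mem_univ, true_and] at hG
    rw [Finset.card_sigma, Finset.sum_const_nat]
    intro u hu
    rw [Finset.card_product, SimpleGraph.card_neighborFinset_eq_degree,
      SimpleGraph.card_neighborFinset_eq_degree, hG.1, hG.1]
  have hAc : (switchClass n d S H F v (k + 1)).card * ((k + 1) * (d * n)) ≤ 6 * A.card := by
    rw [hA, Finset.card_sigma, Finset.mul_sum, ← smul_eq_mul]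
    refine Finset.card_nsmul_le_sum _ _ _ ?_
    intro G hG
    simp only [switchClass, Finset.mem_filter, Finset.mem_univ, true_and] at hG
    obtain ⟨g1, g2, g3, g4⟩ := hG
    have hc : ((G.neighborFinset v ∩ S) \ F.neighborFinset v).card = k + 1 := by
      rw [Finset.card_sdiff_of_subset, g4, SimpleGraph.card_neighborFinset_eq_degree]
      · omega
      · intro w hw
        rw [SimpleGraph.mem_neighborFinset] at hw
        have h1 := g3 hw
        have h2 := hF v w hw
        simp only [Finset.mem_inter, SimpleGraph.mem_neighborFinset]
        exact ⟨h1, by tauto⟩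
    rw [Finset.card_sigma, Finset.mul_sum, ← hc, ← smul_eq_mul]
    refine Finset.card_nsmul_le_sum _ _ _ ?_
    intro u hu
    simp only [Finset.mem_sdiff, Finset.mem_inter, SimpleGraph.mem_neighborFinset] at hu
    exact tSet_card hdn S hS G g1 v u hu.1.2 hu.1.1.symm
  have hmain : (switchClass n d S H F v (k + 1)).card * ((k + 1) * (d * n)) ≤
      6 * ((switchClass n d S H F v k).card * (S.card * (d * d))) := by
    rw [← hBc]; omega
  have hmain' : (switchClass n d S H F v (k + 1)).card * ((k + 1) * n) ≤
      6 * ((switchClass n d S H F v k).card * (S.card * d)) := by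
    refine Nat.le_of_mul_le_mul_left ?_ (show 0 < d by omega)
    nlinarith
  have hn : (0 : ℝ) < n := by
    have : 0 < n := by omega
    exact_mod_cast this
  have hk : (0 : ℝ) < (k : ℝ) + 1 := by positivity
  have hR : ((switchClass n d S H F v (k + 1)).card : ℝ) * (((k : ℝ) + 1) * n) ≤
      6 * ((switchClass n d S H F v k).card * (S.card * d)) := by exact_mod_cast hmain'
  rw [div_div, div_mul_eq_mul_div, le_div_iff₀ (by positivity)]
  nlinarith
end
end
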